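/- A symmetric discrete interval exchange T_λ is minimal (has exactly one orbit) if and only if f(λ) = 1, where f is the recursive orbit-counting function. -/

import Mathlib

/-!
The number of orbits of `T_λ` equals `f(λ)`, by induction along the recursion defining `f`. Write
`λ = a ++ m :: b`, where `m` is the selected part, and let `A`, `B` be the sums of `a` and `b`, so
that the block of `m` is translated by `B - A`.

If `A = B`, that block consists of `m` fixed points, and `T_λ` on the remaining points is conjugate
to the exchange of `a ++ b`. If `0 < B - A ≤ m`, the first `B - A` points of the block are moved off
themselves, so every orbit meets their complement; the first return map of `T_λ` to this complement
is conjugate, by closing the gap, to the exchange of `a ++ (m - (B - A)) :: b`, hence has equally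
many orbits. The case `B < A` follows by the symmetry `x ↦ n + 1 - x`, which conjugates `T_λ` to the
exchange of the reversed list. A part with `|B - A| ≤ m` always exists, namely the one whose block
contains the middle of `{1, …, n}`.
-/

/-- A composition: a nonempty list of positive integers. -/
def IsComposition (l : List ℕ) : Prop := l ≠ [] ∧ ∀ x ∈ l, 0 < x

/-- The `i`-th translation parameter (0-indexed):
`s_i = (sum of parts after position i) - (sum of parts before position i)`. -/
def transParam (l : List ℕ) (i : ℕ) : ℤ :=
  ((l.drop (i + 1)).sum : ℤ) - ((l.take i).sum : ℤ)

/-- The symmetric discrete interval exchange associated to `l`, as a map `ℤ → ℤ`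
(acting on `{1, …, n}`, identity elsewhere): `x ∈ B_i` is sent to `x + s_i`. -/
def Texch (l : List ℕ) (x : ℤ) : ℤ :=
  x + ∑ i ∈ Finset.range l.length,
    (if ((l.take i).sum : ℤ) < x ∧ x ≤ ((l.take (i + 1)).sum : ℤ) then transParam l i else 0)

/-- The orbit of `x` under `T_l`. -/
def orbit (l : List ℕ) (x : ℤ) : Set ℤ := {y | ∃ k : ℕ, (Texch l)^[k] x = y}

/-- The set of orbits of `T_l` on `{1, …, n}`. -/
def orbitsSet (l : List ℕ) : Set (Set ℤ) :=
  {S | ∃ x : ℤ, 1 ≤ x ∧ x ≤ (l.sum : ℤ) ∧ S = orbit l x}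

/-- The number of orbits `γ(T_l)` of `T_l` on `{1, …, n}`. -/
noncomputable def numOrbits (l : List ℕ) : ℕ := (orbitsSet l).ncard

private lemma eraseIdx_sum_aux (l : List ℕ) (t : ℕ) (ht : t < l.length) :
    (l.eraseIdx t).sum + l.getD t 0 = l.sum := by
  induction l generalizing t with
  | nil => simp at ht
  | cons a l ih =>
    cases t with
    | zero => simp [List.eraseIdx, Nat.add_comm]
    | succ t =>
      simp only [List.eraseIdx, List.sum_cons, List.getD_cons_succ]
      have := ih t (by simpa using Nat.lt_of_succ_lt_succ ht)
      omega

private lemma set_sum_aux (l : List ℕ) (t : ℕ) (ht : t < l.length) (v : ℕ) :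
    (l.set t v).sum + l.getD t 0 = l.sum + v := by
  induction l generalizing t with
  | nil => simp at ht
  | cons a l ih =>
    cases t with
    | zero => simp [List.set]; omega
    | succ t =>
      simp only [List.set, List.sum_cons, List.getD_cons_succ]
      have := ih t (by simpa using Nat.lt_of_succ_lt_succ ht)
      omega

def fRec (l : List ℕ) : ℕ :=
  if hl : l.length ≤ 1 then l.sum
  else if hex : ∃ t, t < l.length ∧ |transParam l t| ≤ (l.getD t 0 : ℤ) then
    let t := Nat.find hex
    if hs0 : transParam l t = 0 then l.getD t 0 + fRec (l.eraseIdx t)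
    else if heq : (l.getD t 0 : ℤ) = |transParam l t| then fRec (l.eraseIdx t)
    else fRec (l.set t (l.getD t 0 - (transParam l t).natAbs))
  else 0
termination_by l.sum + l.length
decreasing_by
  · have ht := (Nat.find_spec hex).1
    have h1 := eraseIdx_sum_aux l _ ht
    have h2 : (l.eraseIdx (Nat.find hex)).length + 1 = l.length :=
      List.length_eraseIdx_add_one ht
    omega
  · have ht := (Nat.find_spec hex).1
    have h1 := eraseIdx_sum_aux l _ ht
    have h2 : (l.eraseIdx (Nat.find hex)).length + 1 = l.length :=
      List.length_eraseIdx_add_one ht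
    omega
  · have ht := (Nat.find_spec hex).1
    have habs := (Nat.find_spec hex).2
    set t := Nat.find hex
    have hpos : 1 ≤ (transParam l t).natAbs := Int.natAbs_pos.mpr hs0
    have hle : (transParam l t).natAbs ≤ l.getD t 0 := by
      have h : ((transParam l t).natAbs : ℤ) ≤ (l.getD t 0 : ℤ) := by
        rw [← Int.abs_eq_natAbs]; exact habs
      exact_mod_cast h
    have h1 := set_sum_aux l t ht (l.getD t 0 - (transParam l t).natAbs)
    have h2 : (l.set t (l.getD t 0 - (transParam l t).natAbs)).length = l.length :=
      List.length_set ..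
    omega

open Function Set

/-! ### Orbits and first return maps -/

section ForwardOrbit

variable {α β : Type*} {f : α → α} {g : β → β} {φ : β → α} {X : Set α} {Y : Set β} {x y : α}

/-- The forward orbit of `x` under `f`, including `x` itself; `orbit l` is the case
`f = Texch l`. -/
def forwardOrbit (f : α → α) (x : α) : Set α := {y | ∃ k : ℕ, f^[k] x = y}

lemma iterate_mem_forwardOrbit (f : α → α) (k : ℕ) (x : α) : f^[k] x ∈ forwardOrbit f x :=
  ⟨k, rfl⟩

lemma self_mem_forwardOrbit (f : α → α) (x : α) : x ∈ forwardOrbit f x :=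
  iterate_mem_forwardOrbit f 0 x

lemma forwardOrbit_subset (h : y ∈ forwardOrbit f x) : forwardOrbit f y ⊆ forwardOrbit f x := by
  obtain ⟨k, rfl⟩ := h
  rintro _ ⟨j, rfl⟩
  exact ⟨j + k, iterate_add_apply f j k x⟩

lemma forwardOrbit_eq_of_mem (hx : x ∈ periodicPts f) (h : y ∈ forwardOrbit f x) :
    forwardOrbit f y = forwardOrbit f x := by
  refine (forwardOrbit_subset h).antisymm (forwardOrbit_subset ?_)
  obtain ⟨k, rfl⟩ := h
  obtain ⟨p, hp, hper⟩ := hx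
  -- Going on for `p * k - k` steps completes `k` full periods.
  refine ⟨p * k - k, ?_⟩
  rw [← iterate_add_apply, Nat.sub_add_cancel (Nat.le_mul_of_pos_left k hp)]
  exact hper.mul_const k

lemma forwardOrbit_eq_singleton (hx : IsFixedPt f x) : forwardOrbit f x = {x} := by
  ext y
  simp [forwardOrbit, iterate_fixed hx, eq_comm]

lemma mem_periodicPts_of_injOn (hX : X.Finite) (hmaps : MapsTo f X X) (hinj : InjOn f X)
    (hx : x ∈ X) : x ∈ periodicPts f := by
  have : Finite X := hX
  obtain ⟨p, hp, hper⟩ := (hmaps.restrict_inj.2 hinj).mem_periodicPts ⟨x, hx⟩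
  refine ⟨p, hp, ?_⟩
  have hval := congrArg Subtype.val hper.eq
  rwa [hmaps.iterate_restrict, MapsTo.val_restrict_apply] at hval

/-- `φ` embeds `Y` in such a way that `g` becomes the first return map of `f` to `φ '' Y`. -/
structure IsFirstReturn (f : α → α) (g : β → β) (φ : β → α) (Y : Set β) : Prop where
  mapsTo : MapsTo g Y Y
  injOn : InjOn φ Y
  exists_return : ∀ y ∈ Y, ∃ k, f^[k + 1] (φ y) = φ (g y) ∧ ∀ j < k, f^[j + 1] (φ y) ∉ φ '' Y

namespace IsFirstReturn

lemma of_conj (hmaps : MapsTo g Y Y) (hinj : InjOn φ Y) (hconj : ∀ y ∈ Y, f (φ y) = φ (g y)) :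
    IsFirstReturn f g φ Y :=
  ⟨hmaps, hinj, fun y hy => ⟨0, hconj y hy, by simp⟩⟩

lemma mem_forwardOrbit_iff (h : IsFirstReturn f g φ Y) {y z : β} (hy : y ∈ Y) (hz : z ∈ Y) :
    φ z ∈ forwardOrbit f (φ y) ↔ z ∈ forwardOrbit g y := by
  constructor
  · rintro ⟨n, hn⟩
    induction n using Nat.strong_induction_on generalizing y with
    | _ n ih =>
      cases n with
      | zero => exact h.injOn hy hz hn ▸ self_mem_forwardOrbit g y
      | succ n =>
        obtain ⟨k, hk, havoid⟩ := h.exists_return y hy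
        have hkn : k ≤ n := not_lt.1 fun hlt => havoid n hlt ⟨z, hz, hn.symm⟩
        have hgy : f^[n - k] (φ (g y)) = φ z := by
          rw [← hk, ← iterate_add_apply, ← hn, ← add_assoc, Nat.sub_add_cancel hkn]
        exact forwardOrbit_subset (iterate_mem_forwardOrbit g 1 y)
          (ih (n - k) (by omega) (h.mapsTo hy) hgy)
  · rintro ⟨n, rfl⟩
    clear hz
    induction n generalizing y with
    | zero => exact self_mem_forwardOrbit f (φ y)
    | succ n ih =>
      obtain ⟨k, hk, -⟩ := h.exists_return y hy
      exact forwardOrbit_subset (hk ▸ iterate_mem_forwardOrbit f (k + 1) (φ y)) (ih (h.mapsTo hy))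

lemma inter_preimage_forwardOrbit (h : IsFirstReturn f g φ Y) {y : β} (hy : y ∈ Y) :
    Y ∩ φ ⁻¹' forwardOrbit f (φ y) = forwardOrbit g y := by
  ext z
  constructor
  · rintro ⟨hz, hzy⟩
    exact (h.mem_forwardOrbit_iff hy hz).1 hzy
  · intro hzy
    have hz : z ∈ Y := by
      obtain ⟨k, rfl⟩ := hzy
      exact h.mapsTo.iterate k hy
    exact ⟨hz, (h.mem_forwardOrbit_iff hy hz).2 hzy⟩

lemma ncard_forwardOrbit_image_image (h : IsFirstReturn f g φ Y)
    (hper : φ '' Y ⊆ periodicPts f) :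
    (forwardOrbit f '' (φ '' Y)).ncard = (forwardOrbit g '' Y).ncard := by
  have htrace : forwardOrbit g '' Y
      = (fun S => Y ∩ φ ⁻¹' S) '' (forwardOrbit f '' (φ '' Y)) := by
    rw [image_image, image_image]
    exact image_congr fun y hy => (h.inter_preimage_forwardOrbit hy).symm
  rw [htrace, InjOn.ncard_image (f := fun S => Y ∩ φ ⁻¹' S)]
  rintro _ ⟨_, ⟨y, hy, rfl⟩, rfl⟩ _ ⟨_, ⟨z, hz, rfl⟩, rfl⟩ heq
  have hzy : z ∈ Y ∩ φ ⁻¹' forwardOrbit f (φ y) :=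
    heq.superset ⟨hz, self_mem_forwardOrbit f (φ z)⟩
  exact (forwardOrbit_eq_of_mem (hper (mem_image_of_mem φ hy)) hzy.2).symm

lemma ncard_forwardOrbit_image (h : IsFirstReturn f g φ Y) (hper : X ⊆ periodicPts f)
    (hφ : MapsTo φ Y X) (hmeet : ∀ x ∈ X, (forwardOrbit f x ∩ φ '' Y).Nonempty) :
    (forwardOrbit f '' X).ncard = (forwardOrbit g '' Y).ncard := by
  rw [← h.ncard_forwardOrbit_image_image (hφ.image_subset.trans hper)]
  congr 1
  refine Subset.antisymm ?_ (image_mono hφ.image_subset)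
  rintro _ ⟨x, hx, rfl⟩
  obtain ⟨z, hzx, hz⟩ := hmeet x hx
  exact ⟨z, hz, forwardOrbit_eq_of_mem (hper hx) hzx⟩

end IsFirstReturn

lemma ncard_forwardOrbit_image_union {F : Set α} (hX : X.Finite) (hF : F.Finite)
    (hdisj : Disjoint F X) (hfix : F ⊆ fixedPoints f) :
    (forwardOrbit f '' (F ∪ X)).ncard = F.ncard + (forwardOrbit f '' X).ncard := by
  have hsingle : ∀ x ∈ F, forwardOrbit f x = {x} := fun x hx => forwardOrbit_eq_singleton (hfix hx)
  have hinj : InjOn (forwardOrbit f) F := fun x hx y hy hxy =>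
    singleton_injective (hsingle x hx ▸ hsingle y hy ▸ hxy)
  rw [image_union, ncard_union_eq _ (hF.image _) (hX.image _), hinj.ncard_image]
  rw [Set.disjoint_left]
  rintro _ ⟨x, hx, rfl⟩ ⟨y, hy, hyx⟩
  have hmem : y ∈ ({x} : Set α) := hsingle x hx ▸ hyx ▸ self_mem_forwardOrbit f y
  exact hdisj.notMem_of_mem_left hx (mem_singleton_iff.1 hmem ▸ hy)

end ForwardOrbit

/-! ### The exchange as a translation on each block -/

lemma transParam_append_cons (a b : List ℕ) (m : ℕ) :
    transParam (a ++ m :: b) a.length = b.sum - a.sum := by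
  simp [transParam]

lemma Texch_of_mem_block (a b : List ℕ) (m : ℕ) {x : ℤ} (hx : x ∈ Ioc (a.sum : ℤ) (a.sum + m)) :
    Texch (a ++ m :: b) x = x + b.sum - a.sum := by
  obtain ⟨hlo, hhi⟩ := hx
  have hmono : Monotone fun i => ((a ++ m :: b).take i).sum := List.monotone_sum_take _
  have htake : ((a ++ m :: b).take a.length).sum = a.sum := by simp
  have htake_succ : ((a ++ m :: b).take (a.length + 1)).sum = a.sum + m := by
    simp [List.take_append, List.take_of_length_le]
  rw [Texch, Finset.sum_eq_single a.length, htake, htake_succ, if_pos (by omega),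
    transParam_append_cons]
  · ring
  · intro i _ hi
    refine if_neg ?_
    rcases hi.lt_or_gt with hlt | hgt
    · have hle : ((a ++ m :: b).take (i + 1)).sum ≤ a.sum := htake ▸ hmono hlt
      omega
    · have hle : a.sum + m ≤ ((a ++ m :: b).take i).sum := htake_succ ▸ hmono hgt
      omega
  · simp

lemma exists_block (l : List ℕ) {x : ℤ} (hx : x ∈ Icc 1 (l.sum : ℤ)) :
    ∃ (a : List ℕ) (m : ℕ) (b : List ℕ),
      l = a ++ m :: b ∧ x ∈ Ioc (a.sum : ℤ) (a.sum + m) := by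
  induction l generalizing x with
  | nil => simp only [mem_Icc, List.sum_nil] at hx; omega
  | cons c l ih =>
    simp only [mem_Icc, mem_Ioc, List.sum_cons] at hx ih ⊢
    by_cases hxc : x ≤ c
    · exact ⟨[], c, l, rfl, by simp only [List.sum_nil]; omega⟩
    · obtain ⟨a, m, b, rfl, hlo, hhi⟩ := ih (x := x - c) (by omega)
      exact ⟨c :: a, m, b, rfl, by simp only [List.sum_cons]; omega⟩

lemma Texch_append_left (a c : List ℕ) {x : ℤ} (hx : x ∈ Icc 1 (a.sum : ℤ)) :
    Texch (a ++ c) x = Texch a x + c.sum := by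
  obtain ⟨a₁, m, a₂, rfl, hblock⟩ := exists_block a hx
  rw [List.append_assoc, List.cons_append, Texch_of_mem_block _ _ _ hblock,
    Texch_of_mem_block _ _ _ hblock, List.sum_append]
  omega

lemma Texch_append_right (a c : List ℕ) {x : ℤ} (hx : x ∈ Ioc (a.sum : ℤ) (a.sum + c.sum)) :
    Texch (a ++ c) x = Texch c (x - a.sum) := by
  obtain ⟨hlo, hhi⟩ := hx
  obtain ⟨c₁, m, c₂, rfl, hblock⟩ := exists_block c (x := x - a.sum) ⟨by omega, by omega⟩
  rw [Texch_of_mem_block _ _ _ hblock, ← List.append_assoc, Texch_of_mem_block, List.sum_append]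
  · omega
  · rw [List.sum_append]
    obtain ⟨hlo', hhi'⟩ := hblock
    constructor <;> omega

lemma Texch_append_cons_right (a b : List ℕ) (m : ℕ) {x : ℤ}
    (hx : x ∈ Ioc (a.sum + m : ℤ) (a.sum + m + b.sum)) :
    Texch (a ++ m :: b) x = Texch b (x - (a.sum + m)) := by
  have hsum : ((a ++ [m]).sum : ℤ) = a.sum + m := by simp
  rw [List.append_cons, Texch_append_right _ _ (hsum ▸ hx), hsum]

lemma mapsTo_Texch (l : List ℕ) : MapsTo (Texch l) (Icc 1 (l.sum : ℤ)) (Icc 1 (l.sum : ℤ)) := by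
  intro x hx
  obtain ⟨a, m, b, rfl, hblock⟩ := exists_block l hx
  rw [Texch_of_mem_block _ _ _ hblock]
  obtain ⟨hlo, hhi⟩ := hblock
  simp only [List.sum_append, List.sum_cons]
  constructor <;> omega

lemma Texch_reverse_of_mem_block (a b : List ℕ) (m : ℕ) {x : ℤ}
    (hx : x ∈ Ioc (b.sum : ℤ) (b.sum + m)) :
    Texch (a ++ m :: b).reverse x = x + a.sum - b.sum := by
  rw [List.reverse_append, List.reverse_cons, List.append_assoc, List.singleton_append,
    Texch_of_mem_block _ _ _ (by rwa [List.sum_reverse]), List.sum_reverse, List.sum_reverse]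

lemma leftInvOn_Texch_reverse (l : List ℕ) :
    LeftInvOn (Texch l.reverse) (Texch l) (Icc 1 (l.sum : ℤ)) := by
  intro x hx
  obtain ⟨a, m, b, rfl, hblock⟩ := exists_block l hx
  rw [Texch_of_mem_block _ _ _ hblock, Texch_reverse_of_mem_block]
  · ring
  · simp only [mem_Ioc] at hblock ⊢
    omega

lemma Texch_reverse_reflect (l : List ℕ) {x : ℤ} (hx : x ∈ Icc 1 (l.sum : ℤ)) :
    Texch l.reverse (l.sum + 1 - x) = l.sum + 1 - Texch l x := by
  obtain ⟨a, m, b, rfl, hblock⟩ := exists_block l hx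
  rw [Texch_of_mem_block _ _ _ hblock, Texch_reverse_of_mem_block]
  · ring
  · simp only [mem_Ioc, List.sum_append, List.sum_cons] at hblock ⊢
    omega

lemma Icc_subset_periodicPts_Texch (l : List ℕ) : Icc 1 (l.sum : ℤ) ⊆ periodicPts (Texch l) :=
  fun _ => mem_periodicPts_of_injOn (finite_Icc _ _) (mapsTo_Texch l)
    (leftInvOn_Texch_reverse l).injOn

/-! ### Invariance of the number of orbits -/

lemma numOrbits_eq_ncard_image (l : List ℕ) :
    numOrbits l = (forwardOrbit (Texch l) '' Icc 1 (l.sum : ℤ)).ncard := by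
  rw [numOrbits]
  congr 1
  ext S
  simp only [orbitsSet, orbit, forwardOrbit, mem_ofPred_eq, mem_image, mem_Icc, and_assoc, eq_comm]

lemma numOrbits_eq_of_isFirstReturn {l l' : List ℕ} {φ : ℤ → ℤ}
    (h : IsFirstReturn (Texch l) (Texch l') φ (Icc 1 l'.sum))
    (hφ : MapsTo φ (Icc 1 l'.sum) (Icc 1 l.sum))
    (hmeet : ∀ x ∈ Icc 1 (l.sum : ℤ), x ∉ φ '' Icc 1 l'.sum → Texch l x ∈ φ '' Icc 1 l'.sum) :
    numOrbits l = numOrbits l' := by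
  rw [numOrbits_eq_ncard_image, numOrbits_eq_ncard_image]
  refine h.ncard_forwardOrbit_image (Icc_subset_periodicPts_Texch l) hφ fun x hx => ?_
  by_cases hxφ : x ∈ φ '' Icc 1 l'.sum
  · exact ⟨x, self_mem_forwardOrbit _ x, hxφ⟩
  · exact ⟨_, iterate_mem_forwardOrbit _ 1 x, hmeet x hx hxφ⟩

lemma numOrbits_eq_of_conj {l l' : List ℕ} {φ : ℤ → ℤ}
    (hφ : BijOn φ (Icc 1 l'.sum) (Icc 1 l.sum))
    (hconj : ∀ y ∈ Icc 1 (l'.sum : ℤ), Texch l (φ y) = φ (Texch l' y)) :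
    numOrbits l = numOrbits l' :=
  numOrbits_eq_of_isFirstReturn (.of_conj (mapsTo_Texch l') hφ.injOn hconj) hφ.mapsTo
    fun _ hx hxφ => absurd (hφ.surjOn hx) hxφ

lemma numOrbits_reverse (l : List ℕ) : numOrbits l.reverse = numOrbits l := by
  refine numOrbits_eq_of_conj (φ := fun x => l.sum + 1 - x) ?_
    fun x hx => Texch_reverse_reflect l hx
  rw [List.sum_reverse]
  refine ⟨fun x hx => ?_, fun x _ y _ hxy => ?_, fun x hx => ⟨l.sum + 1 - x, ?_, ?_⟩⟩ <;>
    simp only [mem_Icc] at * <;> omega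

lemma numOrbits_append_zero_cons (a b : List ℕ) : numOrbits (a ++ 0 :: b) = numOrbits (a ++ b) := by
  have hsum : (a ++ 0 :: b).sum = (a ++ b).sum := by simp
  refine numOrbits_eq_of_conj (φ := id) (hsum ▸ bijOn_id _) fun x hx => ?_
  simp only [mem_Icc, List.sum_append, id] at hx ⊢
  by_cases hxa : x ≤ a.sum
  · have hmem : x ∈ Icc 1 (a.sum : ℤ) := ⟨hx.1, hxa⟩
    rw [Texch_append_left a _ hmem, Texch_append_left a _ hmem, List.sum_cons, zero_add]
  · rw [Texch_append_cons_right a b 0 ⟨by omega, by omega⟩,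
      Texch_append_right a b ⟨by omega, by omega⟩, Nat.cast_zero, add_zero]

/-! ### Shrinking and deleting a part -/

/-- For `0 ≤ s`, the increasing map of `ℤ` that is the identity up to `c` and whose range misses
exactly `Ioc c (c + s)`. It embeds the points exchanged after a part has been shrunk by `s` into
those exchanged before. -/
def skipIoc (c s y : ℤ) : ℤ := if y ≤ c then y else y + s

lemma skipIoc_of_le {c s y : ℤ} (h : y ≤ c) : skipIoc c s y = y := if_pos h

lemma skipIoc_of_lt {c s y : ℤ} (h : c < y) : skipIoc c s y = y + s := if_neg h.not_ge

lemma skipIoc_injective {c s : ℤ} (hs : 0 ≤ s) : Injective (skipIoc c s) := by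
  intro x y hxy
  unfold skipIoc at hxy
  split_ifs at hxy <;> omega

lemma image_skipIoc_Icc {c s n : ℤ} (hs : 0 ≤ s) (hc : 0 ≤ c) (hn : c ≤ n) :
    skipIoc c s '' Icc 1 n = Icc 1 (n + s) \ Ioc c (c + s) := by
  ext x
  simp only [mem_image, mem_sdiff, mem_Icc, mem_Ioc]
  constructor
  · rintro ⟨y, hy, rfl⟩
    unfold skipIoc
    split_ifs <;> omega
  · rintro ⟨hx, hgap⟩
    rcases le_or_gt x c with hxc | hxc
    · exact ⟨x, by omega, skipIoc_of_le hxc⟩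
    · exact ⟨x - s, by omega, by rw [skipIoc_of_lt (by omega)]; ring⟩

lemma Icc_sum_append_cons_sdiff_Ioc (a b : List ℕ) (m s : ℕ) :
    Icc 1 ((a ++ (m + s) :: b).sum : ℤ) \ Ioc (a.sum : ℤ) (a.sum + s)
      = skipIoc a.sum s '' Icc 1 ((a ++ m :: b).sum : ℤ) := by
  have hsum : ∀ k, ((a ++ k :: b).sum : ℤ) = a.sum + k + b.sum := fun k => by
    rw [List.sum_append, List.sum_cons]
    omega
  rw [image_skipIoc_Icc (by omega) (by omega) (by rw [hsum]; omega), hsum, hsum]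
  congr 2
  omega

lemma isFirstReturn_append_cons {a b : List ℕ} {s : ℕ} (h : a.sum + s = b.sum) (m : ℕ) :
    IsFirstReturn (Texch (a ++ (m + s) :: b)) (Texch (a ++ m :: b)) (skipIoc a.sum s)
      (Icc 1 (a ++ m :: b).sum) := by
  refine ⟨mapsTo_Texch _, (skipIoc_injective (by omega)).injOn, fun y hy => ?_⟩
  have hy' : 1 ≤ y ∧ y ≤ a.sum + m + b.sum := by
    simpa [add_assoc] using hy
  rcases le_or_gt y a.sum with hya | hya
  · obtain ⟨hlo, -⟩ := mapsTo_Texch a ⟨hy'.1, hya⟩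
    refine ⟨0, ?_, by simp⟩
    rw [zero_add, iterate_one, skipIoc_of_le hya, Texch_append_left a _ ⟨hy'.1, hya⟩,
      Texch_append_left a _ ⟨hy'.1, hya⟩, List.sum_cons, List.sum_cons, skipIoc_of_lt (by omega)]
    omega
  rcases le_or_gt y (a.sum + m) with hym | hym
  · refine ⟨0, ?_, by simp⟩
    rw [zero_add, iterate_one, skipIoc_of_lt hya, Texch_of_mem_block a b _ ⟨hya, hym⟩,
      Texch_of_mem_block a b _ ⟨by omega, by omega⟩, skipIoc_of_lt (by omega)]
    ring
  -- A point right of the block may land in the removed part, whose image is disjoint from it.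
  obtain ⟨-, hhi⟩ := mapsTo_Texch b (x := y - (a.sum + m)) ⟨by omega, by omega⟩
  have hfirst : Texch (a ++ (m + s) :: b) (y + s) = Texch b (y - (a.sum + m)) := by
    rw [Texch_append_cons_right a b _ ⟨by omega, by omega⟩]
    congr 1
    omega
  rw [skipIoc_of_lt hya, Texch_append_cons_right a b m ⟨hym, hy'.2⟩]
  rcases le_or_gt (Texch b (y - (a.sum + m))) a.sum with hua | hua
  · exact ⟨0, by rw [zero_add, iterate_one, hfirst, skipIoc_of_le hua], by simp⟩
  · refine ⟨1, ?_, fun j hj => ?_⟩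
    · rw [iterate_succ_apply, iterate_one, hfirst, skipIoc_of_lt hua,
        Texch_of_mem_block a b _ ⟨hua, by omega⟩]
      omega
    · rw [Nat.lt_one_iff.1 hj, zero_add, iterate_one, hfirst, ← Icc_sum_append_cons_sdiff_Ioc]
      exact fun hmem => hmem.2 ⟨hua, by omega⟩

lemma numOrbits_append_add_cons {a b : List ℕ} {s : ℕ} (h : a.sum + s = b.sum) (m : ℕ) :
    numOrbits (a ++ (m + s) :: b) = numOrbits (a ++ m :: b) := by
  have himage := Icc_sum_append_cons_sdiff_Ioc a b m s
  refine numOrbits_eq_of_isFirstReturn (isFirstReturn_append_cons h m) ?_ ?_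
  · exact mapsTo_iff_image_subset.2 (himage ▸ sdiff_subset)
  · intro x hx hgap
    rw [← himage] at hgap ⊢
    have hxgap : x ∈ Ioc (a.sum : ℤ) (a.sum + s) := by_contra fun hx' => hgap ⟨hx, hx'⟩
    refine ⟨mapsTo_Texch _ hx, ?_⟩
    obtain ⟨hlo, hhi⟩ := hxgap
    rw [Texch_of_mem_block a b _ ⟨hlo, by omega⟩, mem_Ioc]
    omega

lemma numOrbits_append_cons_sub (a b : List ℕ) (m : ℕ) (h : |(b.sum : ℤ) - a.sum| ≤ m) :
    numOrbits (a ++ m :: b) = numOrbits (a ++ (m - ((b.sum : ℤ) - a.sum).natAbs) :: b) := by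
  have hle : ((b.sum : ℤ) - a.sum).natAbs ≤ m := by
    rwa [Int.abs_eq_natAbs, Nat.cast_le] at h
  obtain ⟨k, rfl⟩ := Nat.exists_eq_add_of_le' hle
  rw [Nat.add_sub_cancel]
  rcases le_total a.sum b.sum with hab | hba
  · exact numOrbits_append_add_cons (by omega) k
  · rw [← numOrbits_reverse, ← numOrbits_reverse (a ++ k :: b)]
    simp only [List.reverse_append, List.reverse_cons, List.append_assoc, List.singleton_append]
    exact numOrbits_append_add_cons (by simp only [List.sum_reverse]; omega) k

lemma isFirstReturn_append_of_sum_eq {a b : List ℕ} (h : a.sum = b.sum) (m : ℕ) :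
    IsFirstReturn (Texch (a ++ m :: b)) (Texch (a ++ b)) (skipIoc a.sum m)
      (Icc 1 (a ++ b).sum) := by
  refine .of_conj (mapsTo_Texch _) (skipIoc_injective (by omega)).injOn fun y ⟨hlo, hhi⟩ => ?_
  rw [List.sum_append] at hhi
  rcases le_or_gt y a.sum with hya | hya
  · obtain ⟨hlo', -⟩ := mapsTo_Texch a ⟨hlo, hya⟩
    rw [skipIoc_of_le hya, Texch_append_left a _ ⟨hlo, hya⟩, Texch_append_left a _ ⟨hlo, hya⟩,
      skipIoc_of_lt (by omega), List.sum_cons]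
    omega
  · obtain ⟨-, hhi'⟩ := mapsTo_Texch b (x := y - a.sum) ⟨by omega, by omega⟩
    rw [skipIoc_of_lt hya, Texch_append_cons_right a b m ⟨by omega, by omega⟩,
      Texch_append_right a b ⟨by omega, by omega⟩, skipIoc_of_le (by omega)]
    congr 1
    ring

lemma numOrbits_append_cons_of_sum_eq {a b : List ℕ} (h : a.sum = b.sum) (m : ℕ) :
    numOrbits (a ++ m :: b) = m + numOrbits (a ++ b) := by
  have himage : skipIoc a.sum m '' Icc 1 ((a ++ b).sum : ℤ)
      = Icc 1 ((a ++ m :: b).sum : ℤ) \ Ioc (a.sum : ℤ) (a.sum + m) := by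
    simpa using (Icc_sum_append_cons_sdiff_Ioc a b 0 m).symm
  have hgap : Ioc (a.sum : ℤ) (a.sum + m) ⊆ Icc 1 ((a ++ m :: b).sum : ℤ) := by
    intro x ⟨hlo, hhi⟩
    simp only [mem_Icc, List.sum_append, List.sum_cons]
    omega
  have hfixed : Ioc (a.sum : ℤ) (a.sum + m) ⊆ fixedPoints (Texch (a ++ m :: b)) := by
    intro x hx
    rw [mem_fixedPoints_iff, Texch_of_mem_block a b m hx, h, add_sub_cancel_right]
  rw [numOrbits_eq_ncard_image, numOrbits_eq_ncard_image, ← union_sdiff_cancel hgap, ← himage,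
    ncard_forwardOrbit_image_union ((finite_Icc _ _).image _) (finite_Ioc _ _)
      (himage ▸ disjoint_sdiff_right) hfixed,
    (isFirstReturn_append_of_sum_eq h m).ncard_forwardOrbit_image_image
      (himage ▸ sdiff_subset.trans (Icc_subset_periodicPts_Texch _)),
    ← Finset.coe_Ioc, ncard_coe_finset, Int.card_Ioc]
  congr 1
  omega

/-! ### The recursion -/

lemma exists_eq_append_cons_of_lt {α : Type*} {l : List α} {t : ℕ} (ht : t < l.length) :
    ∃ a m b, l = a ++ m :: b ∧ t = a.length :=
  ⟨l.take t, l[t], l.drop (t + 1), by simp, by simp; omega⟩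

lemma getD_append_cons {α : Type*} (a b : List α) (m d : α) :
    (a ++ m :: b).getD a.length d = m := by
  simp

lemma set_append_cons {α : Type*} (a b : List α) (m v : α) :
    (a ++ m :: b).set a.length v = a ++ v :: b := by
  simp

lemma eraseIdx_append_cons {α : Type*} (a b : List α) (m : α) :
    (a ++ m :: b).eraseIdx a.length = a ++ b := by
  simp [List.eraseIdx_append_of_length_le]

lemma numOrbits_set_sub {l : List ℕ} {t : ℕ} (ht : t < l.length)
    (hle : |transParam l t| ≤ (l.getD t 0 : ℤ)) :
    numOrbits l = numOrbits (l.set t (l.getD t 0 - (transParam l t).natAbs)) := by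
  obtain ⟨a, m, b, rfl, rfl⟩ := exists_eq_append_cons_of_lt ht
  rw [transParam_append_cons, getD_append_cons] at hle ⊢
  rw [set_append_cons, ← numOrbits_append_cons_sub a b m hle]

lemma numOrbits_eraseIdx_of_eq_abs_transParam {l : List ℕ} {t : ℕ} (ht : t < l.length)
    (heq : (l.getD t 0 : ℤ) = |transParam l t|) : numOrbits l = numOrbits (l.eraseIdx t) := by
  have hzero : l.getD t 0 - (transParam l t).natAbs = 0 := by
    rw [Int.abs_eq_natAbs, Nat.cast_inj] at heq
    rw [heq, Nat.sub_self]
  rw [numOrbits_set_sub ht heq.ge, hzero]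
  obtain ⟨a, m, b, rfl, rfl⟩ := exists_eq_append_cons_of_lt ht
  rw [set_append_cons, eraseIdx_append_cons, numOrbits_append_zero_cons]

lemma numOrbits_eraseIdx_of_transParam_eq_zero {l : List ℕ} {t : ℕ} (ht : t < l.length)
    (h : transParam l t = 0) : numOrbits l = l.getD t 0 + numOrbits (l.eraseIdx t) := by
  obtain ⟨a, m, b, rfl, rfl⟩ := exists_eq_append_cons_of_lt ht
  rw [transParam_append_cons] at h
  rw [eraseIdx_append_cons, getD_append_cons, numOrbits_append_cons_of_sum_eq (by omega)]

lemma numOrbits_nil : numOrbits [] = 0 := by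
  simp [numOrbits_eq_ncard_image]

lemma numOrbits_singleton (m : ℕ) : numOrbits [m] = m := by
  simpa [numOrbits_nil] using numOrbits_append_cons_of_sum_eq (a := []) (b := []) rfl m

lemma exists_abs_transParam_le {l : List ℕ} (hl : l ≠ []) :
    ∃ t, t < l.length ∧ |transParam l t| ≤ (l.getD t 0 : ℤ) := by
  rcases Nat.eq_zero_or_pos l.sum with hzero | hpos
  · obtain ⟨m, b, rfl⟩ := List.exists_cons_of_ne_nil hl
    refine ⟨0, by simp, ?_⟩
    simp_all [transParam]
  · obtain ⟨a, m, b, rfl, hlo, hhi⟩ :=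
      exists_block l (x := (l.sum + 1) / 2) ⟨by omega, by omega⟩
    refine ⟨a.length, by simp, ?_⟩
    rw [transParam_append_cons, getD_append_cons, abs_le]
    simp only [List.sum_append, List.sum_cons] at hlo hhi
    omega

theorem numOrbits_eq_fRec (l : List ℕ) : numOrbits l = fRec l := by
  fun_induction fRec l with
  | case1 l hlen =>
    rcases Nat.le_one_iff_eq_zero_or_eq_one.1 hlen with h | h
    · rw [List.length_eq_zero_iff.1 h, numOrbits_nil, List.sum_nil]
    · obtain ⟨m, rfl⟩ := List.length_eq_one_iff.1 h
      rw [numOrbits_singleton, List.sum_singleton]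
  | case2 l _ hex _ hzero ih =>
    rw [numOrbits_eraseIdx_of_transParam_eq_zero (Nat.find_spec hex).1 hzero, ih]
  | case3 l _ hex _ _ heq ih =>
    rw [numOrbits_eraseIdx_of_eq_abs_transParam (Nat.find_spec hex).1 heq, ih]
  | case4 l _ hex _ _ _ ih =>
    rw [numOrbits_set_sub (Nat.find_spec hex).1 (Nat.find_spec hex).2, ih]
  | case5 l hlen hex =>
    exact absurd (exists_abs_transParam_le (by rintro rfl; simp at hlen)) hex

/-- Corollary 3.6: `T_λ` is minimal (has exactly one orbit)
iff `f(λ) = 1`. -/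
theorem minimal_iff_fRec_eq_one (l : List ℕ) (hl : IsComposition l) :
    numOrbits l = 1 ↔ fRec l = 1 := by
  rw [numOrbits_eq_fRec]
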